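/- Define Δv(θ,p) = θ·ln(θ/p) − θ + p − θ·ln(2)/2 for θ ∈ [p, 2p) and Δv(θ,p) = θ·ln(2)/2 − p for θ ∈ [2p, 1]. If p > 1/2 then Δv(θ,p) < 0 for all θ ∈ [p, 1]; if ln(2)/2 < p ≤ 1/2 then likewise Δv(θ,p) < 0 for all θ ∈ [p, 1]; if p ≤ ln(2)/2 then there is a unique θ̃ = 2p/ln(2) ∈ [2p, 1] with Δv(θ̃,p) = 0, Δv(θ,p) > 0 for θ > θ̃, and Δv(θ,p) < 0 for θ ∈ [2p, θ̃). -/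

import Mathlib

open Real Set

/-- Payoff improvement of a type-`θ` user switching from the zero-price local duopoly
service with coverage `G/2` to the global usage-based service with price `p` and full
coverage (normalized by `G`), under `k = 1` and optimal usage. -/
noncomputable def Δv (θ p : ℝ) : ℝ :=
  if θ < 2 * p then θ * Real.log (θ / p) - θ + p - θ * Real.log 2 / 2
  else θ * Real.log 2 / 2 - p

/-! On `[p, 2p]` the interior-usage branch of `Δv` is a convex function of `θ` that is negative at
both endpoints, hence negative throughout. On `[2p, ∞)` the function is affine in `θ` with positive
slope `log 2 / 2` and root `2p / log 2`. As `log 2 < 1`, this root lies beyond `2p`, so `Δv` has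
the sign of `θ - 2p / log 2` on all of `[p, ∞)`. -/

theorem log_two_lt_one : log 2 < 1 :=
  log_two_lt_d9.trans (by norm_num)

theorem lt_div_log_two {a : ℝ} (ha : 0 < a) : a < a / log 2 :=
  (lt_div_iff₀ (log_pos one_lt_two)).2 (mul_lt_of_lt_one_right ha log_two_lt_one)

theorem convexOn_mul_log_div {c : ℝ} (hc : c ≠ 0) :
    ConvexOn ℝ (Ici 0) fun x : ℝ ↦ x * log (x / c) := by
  have hlinear : ConvexOn ℝ (Ici 0) fun x : ℝ ↦ -log c * x :=
    (LinearMap.mulLeft ℝ (-log c)).convexOn (convex_Ici 0)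
  refine (convexOn_mul_log.add hlinear).congr fun x _ ↦ ?_
  rcases eq_or_ne x 0 with rfl | hx
  · simp
  · simp only [Pi.add_apply, log_div hx hc]
    ring

theorem Δv_of_lt_two_mul {θ p : ℝ} (h : θ < 2 * p) :
    Δv θ p = θ * log (θ / p) - θ + p - θ * log 2 / 2 :=
  if_pos h

theorem Δv_eq_mul_sub_of_two_mul_le {θ p : ℝ} (h : 2 * p ≤ θ) :
    Δv θ p = log 2 / 2 * (θ - 2 * p / log 2) := by
  have hlog : log 2 ≠ 0 := (log_pos one_lt_two).ne'
  rw [Δv, if_neg h.not_gt]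
  field_simp

theorem Δv_neg_of_lt_two_mul {θ p : ℝ} (hpθ : p ≤ θ) (h : θ < 2 * p) : Δv θ p < 0 := by
  have hp : 0 < p := by linarith
  set f : ℝ → ℝ := fun x ↦ x * log (x / p) + -(1 + log 2 / 2) * x + p with hf
  have hconvex : ConvexOn ℝ (Ici 0) f :=
    ((convexOn_mul_log_div hp.ne').add
      ((LinearMap.mulLeft ℝ (-(1 + log 2 / 2))).convexOn (convex_Ici 0))).add_const p
  have hleft : f p < 0 :=
    calc
      f p = -(p * (log 2 / 2)) := by
        simp only [hf, div_self hp.ne', log_one]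
        ring
      _ < 0 := neg_neg_of_pos (mul_pos hp (half_pos (log_pos one_lt_two)))
  have hright : f (2 * p) < 0 :=
    calc
      f (2 * p) = p * (log 2 - 1) := by
        simp only [hf, mul_div_cancel_right₀ _ hp.ne']
        ring
      _ < 0 := mul_neg_of_pos_of_neg hp (sub_neg.2 log_two_lt_one)
  calc
    Δv θ p = f θ := by
      rw [Δv_of_lt_two_mul h]
      ring
    _ ≤ max (f p) (f (2 * p)) :=
      hconvex.le_max_of_mem_Icc hp.le (mul_pos two_pos hp).le ⟨hpθ, h.le⟩
    _ < 0 := max_lt hleft hright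

theorem global_entry_under_local_competition_general {θ p : ℝ} (hp : 0 < p) (hpθ : p ≤ θ) :
    SignType.sign (Δv θ p) = SignType.sign (θ - 2 * p / log 2) := by
  rcases lt_or_ge θ (2 * p) with h | h
  · have hroot : θ < 2 * p / log 2 := h.trans (lt_div_log_two (mul_pos two_pos hp))
    rw [sign_neg (Δv_neg_of_lt_two_mul hpθ h), sign_neg (sub_neg.2 hroot)]
  · rw [Δv_eq_mul_sub_of_two_mul_le h, sign_mul, sign_pos (half_pos (log_pos one_lt_two)), one_mul]

theorem Δv_neg_iff {θ p : ℝ} (hp : 0 < p) (hpθ : p ≤ θ) : Δv θ p < 0 ↔ θ < 2 * p / log 2 := by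
  rw [← sign_eq_neg_one_iff, global_entry_under_local_competition_general hp hpθ,
    sign_eq_neg_one_iff, sub_neg]

theorem Δv_eq_zero_iff {θ p : ℝ} (hp : 0 < p) (hpθ : p ≤ θ) :
    Δv θ p = 0 ↔ θ = 2 * p / log 2 := by
  rw [← _root_.sign_eq_zero_iff, global_entry_under_local_competition_general hp hpθ,
    _root_.sign_eq_zero_iff, sub_eq_zero]

theorem Δv_pos_iff {θ p : ℝ} (hp : 0 < p) (hpθ : p ≤ θ) : 0 < Δv θ p ↔ 2 * p / log 2 < θ := by
  rw [← sign_eq_one_iff, global_entry_under_local_competition_general hp hpθ,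
    sign_eq_one_iff, sub_pos]

theorem global_entry_under_local_competition (p : ℝ) (hp : 0 < p) :
    (1 / 2 < p → ∀ θ ∈ Icc p 1, Δv θ p < 0) ∧
    (Real.log 2 / 2 < p → p ≤ 1 / 2 → ∀ θ ∈ Icc p 1, Δv θ p < 0) ∧
    (p ≤ Real.log 2 / 2 →
      2 * p / Real.log 2 ∈ Icc (2 * p) 1 ∧
      Δv (2 * p / Real.log 2) p = 0 ∧
      (∀ θ ∈ Icc (2 * p) 1, Δv θ p = 0 → θ = 2 * p / Real.log 2) ∧
      (∀ θ ∈ Ioc (2 * p / Real.log 2) 1, 0 < Δv θ p) ∧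
      (∀ θ ∈ Ico (2 * p) (2 * p / Real.log 2), Δv θ p < 0)) := by
  have hlog : 0 < log 2 := log_pos one_lt_two
  have hp_le : p ≤ 2 * p := by linarith
  have hp_root : 2 * p < 2 * p / log 2 := lt_div_log_two (mul_pos two_pos hp)
  have hneg (h : log 2 / 2 < p) : ∀ θ ∈ Icc p 1, Δv θ p < 0 := fun θ hθ ↦
    (Δv_neg_iff hp hθ.1).2 (hθ.2.trans_lt ((one_lt_div hlog).2 (by linarith)))
  refine ⟨fun h ↦ hneg (by linarith [log_two_lt_one]), fun h _ ↦ hneg h, fun h ↦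
    ⟨⟨hp_root.le, (div_le_one hlog).2 (by linarith)⟩, ?zero, ?unique, ?pos, ?neg⟩⟩
  case zero => exact (Δv_eq_zero_iff hp (hp_le.trans hp_root.le)).2 rfl
  case unique => exact fun θ hθ ↦ (Δv_eq_zero_iff hp (hp_le.trans hθ.1)).1
  case pos => exact fun θ hθ ↦ (Δv_pos_iff hp (hp_le.trans (hp_root.trans hθ.1).le)).2 hθ.1
  case neg => exact fun θ hθ ↦ (Δv_neg_iff hp (hp_le.trans hθ.1)).2 hθ.2
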